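/- (Theorem 5, existence part) Suppose n is odd, λ = 1/2, and p ≥ 1, and write C_p = C^{1/2}_p. Then the bilinear map Z_p : A × A → A defined by Z_p(φ,ψ) = T_p(C_p(S_p φ, S_p ψ)) is bidifferential; equivalently, since T_p and S_p are invertible on A, there is a bidifferential operator Z_p such that C_p(φ,ψ) = T_p^{−1}(Z_p(S_p^{−1}φ, S_p^{−1}ψ)) for all φ, ψ ∈ A. -/

import Mathlib

open MvPolynomial

/-- The polynomial symbol algebra `A = ℂ[u₁,…,uₙ,ξ₁,…,ξₙ]`: variables `Sum.inl i` are the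
`uᵢ` and variables `Sum.inr i` are the `ξᵢ`. -/
abbrev PolA (n : ℕ) := MvPolynomial (Fin n ⊕ Fin n) ℂ

namespace LO

/-- ξ-degree of a monomial exponent. -/
def xiDeg {n : ℕ} (d : (Fin n ⊕ Fin n) →₀ ℕ) : ℕ :=
  ∑ i : Fin n, d (Sum.inr i)

/-- `c(E)`: the operator multiplying the ξ-degree-`m` component by `c m`. -/
noncomputable def cE {n : ℕ} (c : ℕ → ℂ) (φ : PolA n) : PolA n :=
  ∑ d ∈ φ.support, monomial d (c (xiDeg d) * coeff d φ)

/-- `D = Σᵢ ∂²/∂uᵢ∂ξᵢ`. -/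
noncomputable def Dop {n : ℕ} (φ : PolA n) : PolA n :=
  ∑ i : Fin n, pderiv (Sum.inl i) (pderiv (Sum.inr i) φ)

/-- The scalar `h^λ_d(m)`. -/
noncomputable def hScal (n : ℕ) (lam : ℂ) (d m : ℕ) : ℂ :=
  (d.factorial : ℂ)⁻¹ *
    ∏ j ∈ Finset.range d,
      ((m : ℂ) + (j : ℂ) + lam * ((n : ℂ) + 1)) /
        (2 * (m : ℂ) + (j : ℂ) + (n : ℂ) + (d : ℂ))

/-- The scalar `g^λ_d(m)`. -/
noncomputable def gScal (n : ℕ) (lam : ℂ) (d m : ℕ) : ℂ :=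
  (d.factorial : ℂ)⁻¹ *
    ∏ j ∈ Finset.range d,
      (-(m : ℂ) - (j : ℂ) - lam * ((n : ℂ) + 1)) /
        (2 * (m : ℂ) + (j : ℂ) + (n : ℂ) + 1)

/-- `bh^λ_d = h^λ_d(E) ∘ D^d` (equal to the identity for `d = 0`). -/
noncomputable def bh {n : ℕ} (lam : ℂ) (d : ℕ) (φ : PolA n) : PolA n :=
  cE (hScal n lam d) (Dop^[d] φ)

/-- `bg^λ_d = g^λ_d(E) ∘ D^d` (equal to the identity for `d = 0`). -/
noncomputable def bg {n : ℕ} (lam : ℂ) (d : ℕ) (φ : PolA n) : PolA n :=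
  cE (gScal n lam d) (Dop^[d] φ)

/-- `N_k(φ,ψ) = (1/k!) Σ_{α ∈ {1,…,n}^k} ∂^kφ/∂ξ_α · ∂^kψ/∂u_α`. -/
noncomputable def Nop {n : ℕ} (k : ℕ) (φ ψ : PolA n) : PolA n :=
  (k.factorial : ℂ)⁻¹ •
    ∑ α : Fin k → Fin n,
      ((List.ofFn α).foldr (fun i acc => pderiv (Sum.inr i) acc) φ) *
      ((List.ofFn α).foldr (fun i acc => pderiv (Sum.inl i) acc) ψ)

/-- The coefficient `C^λ_p` of the Lecomte–Ovsienko star product. -/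
noncomputable def C (n : ℕ) (lam : ℂ) (p : ℕ) (φ ψ : PolA n) : PolA n :=
  ∑ i ∈ Finset.range (p + 1), ∑ j ∈ Finset.range (p + 1),
    ∑ k ∈ Finset.range (p + 1), ∑ m ∈ Finset.range (p + 1),
      if i + j + k + m = p then bg lam m (Nop k (bh lam i φ) (bh lam j ψ)) else 0

/-- The Poisson bracket `{φ,ψ}`. -/
noncomputable def pb {n : ℕ} (φ ψ : PolA n) : PolA n :=
  ∑ i : Fin n,
    (pderiv (Sum.inr i) φ * pderiv (Sum.inl i) ψ
      - pderiv (Sum.inl i) φ * pderiv (Sum.inr i) ψ)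

/-- `φ ∈ A^m` (ξ-homogeneous of degree `m`; for `m < 0` this forces `φ = 0`). -/
def IsXiHomog {n : ℕ} (m : ℤ) (φ : PolA n) : Prop :=
  ∀ d ∈ φ.support, (xiDeg d : ℤ) = m

/-- The set of spanning momentum functions of the projective `sl_{n+1}(ℝ)`-action. -/
noncomputable def momSet (n : ℕ) : Set (PolA n) :=
  (Set.range fun i : Fin n => (X (Sum.inr i) : PolA n)) ∪
  (Set.range fun ij : Fin n × Fin n =>
    (X (Sum.inl ij.1) * X (Sum.inr ij.2) : PolA n)) ∪
  (Set.range fun i : Fin n =>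
    (X (Sum.inl i) * ∑ k : Fin n, X (Sum.inl k) * X (Sum.inr k) : PolA n))

/-- The span `M` of the momentum functions. -/
noncomputable def momSpan (n : ℕ) : Submodule ℂ (PolA n) := Submodule.span ℂ (momSet n)

/-- The Weyl algebra `W` of differential operators with polynomial coefficients,
as a subalgebra of `End_ℂ(A)`. -/
noncomputable def Weyl (n : ℕ) : Subalgebra ℂ (Module.End ℂ (PolA n)) :=
  Algebra.adjoin ℂ
    ((Set.range fun i : Fin n =>
        (LinearMap.mulLeft ℂ (X (Sum.inl i)) : Module.End ℂ (PolA n))) ∪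
     (Set.range fun i : Fin n =>
        (LinearMap.mulLeft ℂ (X (Sum.inr i)) : Module.End ℂ (PolA n))) ∪
     (Set.range fun v : Fin n ⊕ Fin n =>
        ((pderiv v).toLinearMap : Module.End ℂ (PolA n))))

/-- A bilinear map `B : A × A → A` is bidifferential if it is a finite sum
`B(φ,ψ) = Σ_α A_α(φ)·B_α(ψ)` with `A_α, B_α` in the Weyl algebra. -/
def Bidiff (n : ℕ) (B : PolA n → PolA n → PolA n) : Prop :=
  ∃ (N : ℕ) (Aop Bop : Fin N → Weyl n),
    ∀ φ ψ : PolA n,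
      B φ ψ = ∑ α : Fin N,
        (Aop α : Module.End ℂ (PolA n)) φ * (Bop α : Module.End ℂ (PolA n)) ψ

/-- The scalar by which `T_p = ∏_{i=1}^{⌊p/2⌋}(E'+i)` acts on `A^m`. -/
noncomputable def TScal (n p m : ℕ) : ℂ :=
  ∏ i ∈ Finset.Icc 1 (p / 2), ((m : ℂ) + (n : ℂ) / 2 + (i : ℂ))

/-- The scalar by which `S_p = ∏_{i=1}^{⌊p/2⌋}(E'−i)` acts on `A^m`. -/
noncomputable def SScal (n p m : ℕ) : ℂ :=
  ∏ i ∈ Finset.Icc 1 (p / 2), ((m : ℂ) + (n : ℂ) / 2 - (i : ℂ))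

/-- The operator `T_p`. -/
noncomputable def Tp (n p : ℕ) : PolA n → PolA n := cE (TScal n p)

/-- The operator `S_p`. -/
noncomputable def Sp (n p : ℕ) : PolA n → PolA n := cE (SScal n p)

/-- The fiberwise Euler operator `E = Σ ξᵢ ∂/∂ξᵢ` as an endomorphism. -/
noncomputable def Elin (n : ℕ) : Module.End ℂ (PolA n) :=
  ∑ i : Fin n,
    (LinearMap.mulLeft ℂ (X (Sum.inr i)) : Module.End ℂ (PolA n)) ∘ₗ
      (pderiv (Sum.inr i)).toLinearMap

/-- `E' = E + n/2` as an endomorphism. -/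
noncomputable def E'lin (n : ℕ) : Module.End ℂ (PolA n) :=
  Elin n + ((n : ℂ) / 2) • 1

/-- `D` as an endomorphism. -/
noncomputable def Dlin (n : ℕ) : Module.End ℂ (PolA n) :=
  ∑ i : Fin n,
    ((pderiv (Sum.inl i)).toLinearMap : Module.End ℂ (PolA n)) ∘ₗ
      (pderiv (Sum.inr i)).toLinearMap

/-- `L^{(m)} = −(1/16)(ξ_m∘D − 2E'∘∂/∂u_m)∘D`. -/
noncomputable def Lop (n : ℕ) (m : Fin n) : Module.End ℂ (PolA n) :=
  (-(1 / 16 : ℂ)) •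
    (((LinearMap.mulLeft ℂ (X (Sum.inr m)) : Module.End ℂ (PolA n)) ∘ₗ Dlin n
        - (2 : ℂ) • (E'lin n ∘ₗ (pderiv (Sum.inl m)).toLinearMap)) ∘ₗ Dlin n)

end LO

namespace LO

lemma coeff_cE {n : ℕ} (c : ℕ → ℂ) (φ : PolA n) (d : (Fin n ⊕ Fin n) →₀ ℕ) :
    coeff d (cE c φ) = c (xiDeg d) * coeff d φ := by
  classical
  unfold cE
  rw [coeff_sum]
  simp only [coeff_monomial]
  rw [Finset.sum_ite_eq' φ.support d]
  split_ifs with h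
  · rfl
  · rw [notMem_support_iff.mp h, mul_zero]

/-- `c(E)` as a linear map. -/
noncomputable def cEl {n : ℕ} (c : ℕ → ℂ) : Module.End ℂ (PolA n) where
  toFun := cE c
  map_add' x y := by
    ext d
    simp only [coeff_cE, coeff_add]; ring
  map_smul' a x := by
    ext d
    simp only [coeff_cE, coeff_smul, smul_eq_mul, RingHom.id_apply]; ring

lemma cEl_apply {n : ℕ} (c : ℕ → ℂ) (φ : PolA n) : cEl c φ = cE c φ := rfl

lemma cE_cE {n : ℕ} (c c' : ℕ → ℂ) (φ : PolA n) :
    cE c (cE c' φ) = cE (fun m => c m * c' m) φ := by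
  ext d
  simp only [coeff_cE]; ring

lemma cE_monomial {n : ℕ} (c : ℕ → ℂ) (d : (Fin n ⊕ Fin n) →₀ ℕ) (a : ℂ) :
    cE c (monomial d a) = monomial d (c (xiDeg d) * a) := by
  classical
  ext e
  simp only [coeff_cE, coeff_monomial]
  split_ifs with h
  · rw [h]
  · simp

lemma Dlin_apply {n : ℕ} (φ : PolA n) : Dlin n φ = Dop φ := by
  simp [Dlin, Dop]

lemma pderiv_u_cE {n : ℕ} (c : ℕ → ℂ) (i : Fin n) (φ : PolA n) :
    pderiv (Sum.inl i) (cE c φ) = cE c (pderiv (Sum.inl i) φ) := by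
  have : ((pderiv (Sum.inl i)).toLinearMap : Module.End ℂ (PolA n)) ∘ₗ cEl c
      = cEl c ∘ₗ (pderiv (Sum.inl i)).toLinearMap := by
    refine MvPolynomial.linearMap_ext ?_
    intro d
    ext1
    change pderiv (Sum.inl i) (cE c (monomial d 1)) = cE c (pderiv (Sum.inl i) (monomial d 1))
    rw [cE_monomial, pderiv_monomial, pderiv_monomial, cE_monomial]
    have : xiDeg (d - Finsupp.single (Sum.inl i) 1) = xiDeg d := by
      simp [xiDeg]
    rw [this]; ring_nf
  exact LinearMap.congr_fun this φ

lemma pderiv_xi_cE {n : ℕ} (c : ℕ → ℂ) (i : Fin n) (φ : PolA n) :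
    pderiv (Sum.inr i) (cE c φ) = cE (fun m => c (m + 1)) (pderiv (Sum.inr i) φ) := by
  have : ((pderiv (Sum.inr i)).toLinearMap : Module.End ℂ (PolA n)) ∘ₗ cEl c
      = cEl (fun m => c (m + 1)) ∘ₗ (pderiv (Sum.inr i)).toLinearMap := by
    refine MvPolynomial.linearMap_ext ?_
    intro d
    ext1
    change pderiv (Sum.inr i) (cE c (monomial d 1))
      = cE (fun m => c (m + 1)) (pderiv (Sum.inr i) (monomial d 1))
    rw [cE_monomial, pderiv_monomial, pderiv_monomial, cE_monomial]
    rcases Nat.eq_zero_or_pos (d (Sum.inr i)) with h | h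
    · simp [h]
    · have : xiDeg (d - Finsupp.single (Sum.inr i) 1) + 1 = xiDeg d := by
        classical
        unfold xiDeg
        rw [← Finset.add_sum_erase _ _ (Finset.mem_univ i),
          ← Finset.add_sum_erase Finset.univ (fun j => d (Sum.inr j)) (Finset.mem_univ i)]
        have h2 : ∑ x ∈ Finset.univ.erase i, (d - Finsupp.single (Sum.inr i) 1 : (Fin n ⊕ Fin n) →₀ ℕ) (Sum.inr x)
            = ∑ x ∈ Finset.univ.erase i, d (Sum.inr x) := by
          apply Finset.sum_congr rfl
          intro x hx
          have hx' : x ≠ i := Finset.ne_of_mem_erase hx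
          simp [hx']
        rw [h2]
        simp
        omega
      rw [this]; ring_nf
  exact LinearMap.congr_fun this φ

lemma cE_sum {n : ℕ} (c : ℕ → ℂ) {ι : Type*} (s : Finset ι) (f : ι → PolA n) :
    cE c (∑ i ∈ s, f i) = ∑ i ∈ s, cE c (f i) :=
  map_sum (cEl c) f s

lemma Dop_cE {n : ℕ} (c : ℕ → ℂ) (φ : PolA n) :
    Dop (cE c φ) = cE (fun m => c (m + 1)) (Dop φ) := by
  simp only [Dop, cE_sum, pderiv_xi_cE, pderiv_u_cE]

lemma Dop_iter_cE {n : ℕ} (d : ℕ) (c : ℕ → ℂ) (φ : PolA n) :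
    Dop^[d] (cE c φ) = cE (fun m => c (m + d)) (Dop^[d] φ) := by
  induction d generalizing c φ with
  | zero => simp
  | succ d ih =>
    rw [Function.iterate_succ_apply, Function.iterate_succ_apply, Dop_cE, ih]
    congr 1

lemma u_mem {n : ℕ} (v : Fin n ⊕ Fin n) :
    (LinearMap.mulLeft ℂ (X v) : Module.End ℂ (PolA n)) ∈ Weyl n := by
  apply Algebra.subset_adjoin
  rcases v with i | i
  · exact Or.inl (Or.inl ⟨i, rfl⟩)
  · exact Or.inl (Or.inr ⟨i, rfl⟩)

lemma pd_mem {n : ℕ} (v : Fin n ⊕ Fin n) :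
    ((pderiv v).toLinearMap : Module.End ℂ (PolA n)) ∈ Weyl n :=
  Algebra.subset_adjoin (Or.inr ⟨v, rfl⟩)

lemma Dlin_mem (n : ℕ) : Dlin n ∈ Weyl n :=
  Subalgebra.sum_mem _ fun _ _ => Subalgebra.mul_mem _ (pd_mem _) (pd_mem _)

lemma Elin_mem (n : ℕ) : Elin n ∈ Weyl n :=
  Subalgebra.sum_mem _ fun _ _ => Subalgebra.mul_mem _ (u_mem _) (pd_mem _)

lemma Elin_eq (n : ℕ) : Elin n = cEl (fun m => (m : ℂ)) := by
  refine MvPolynomial.linearMap_ext ?_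
  intro d
  ext1
  change Elin n (monomial d 1) = cE (fun m => (m : ℂ)) (monomial d 1)
  rw [cE_monomial]
  simp only [Elin, LinearMap.sum_apply, LinearMap.comp_apply, LinearMap.mulLeft_apply]
  have : ∀ i : Fin n, (X (Sum.inr i) : PolA n) *
      ((pderiv (Sum.inr i)).toLinearMap : Module.End ℂ (PolA n)) (monomial d 1)
      = monomial d (d (Sum.inr i) : ℂ) := by
    intro i
    change (X (Sum.inr i) : PolA n) * pderiv (Sum.inr i) (monomial d 1) = _
    rw [X_mul_pderiv_monomial]
    rw [← map_nsmul]; simp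
  rw [Finset.sum_congr rfl fun i _ => this i, ← map_sum]
  simp [xiDeg]

/-- Polynomial functions on the naturals. -/
def IsPoly (f : ℕ → ℂ) : Prop := ∃ P : Polynomial ℂ, ∀ m : ℕ, f m = P.eval (m : ℂ)

lemma IsPoly.const (a : ℂ) : IsPoly fun _ => a := ⟨Polynomial.C a, by simp⟩
lemma IsPoly.addc (a : ℂ) : IsPoly fun m => (m : ℂ) + a :=
  ⟨Polynomial.X + Polynomial.C a, by simp⟩
lemma IsPoly.mul {f g : ℕ → ℂ} (hf : IsPoly f) (hg : IsPoly g) : IsPoly fun m => f m * g m := by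
  obtain ⟨P, hP⟩ := hf
  obtain ⟨Q, hQ⟩ := hg
  exact ⟨P * Q, fun m => by simp [hP, hQ]⟩
lemma IsPoly.prod {ι : Type*} (s : Finset ι) (a : ι → ℂ) :
    IsPoly fun m => ∏ i ∈ s, ((m : ℂ) + a i) :=
  ⟨∏ i ∈ s, (Polynomial.X + Polynomial.C (a i)), fun m => by simp [Polynomial.eval_prod]⟩

lemma cEl_mem {n : ℕ} {f : ℕ → ℂ} (hf : IsPoly f) : (cEl f : Module.End ℂ (PolA n)) ∈ Weyl n := by
  obtain ⟨P, hP⟩ := hf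
  obtain rfl : f = fun m : ℕ => P.eval (m : ℂ) := funext hP
  clear hP
  induction P using Polynomial.induction_on' with
  | add p q hp hq =>
    have : (cEl (fun m : ℕ => (p + q).eval (m : ℂ)) : Module.End ℂ (PolA n))
        = cEl (fun m : ℕ => p.eval (m : ℂ)) + cEl (fun m : ℕ => q.eval (m : ℂ)) := by
      refine LinearMap.ext fun φ => ?_
      rw [LinearMap.add_apply, cEl_apply, cEl_apply, cEl_apply]
      ext d
      simp only [coeff_add, coeff_cE, Polynomial.eval_add]; ring
    rw [this]
    exact Subalgebra.add_mem _ hp hq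
  | monomial k a =>
    have : (cEl (fun m : ℕ => (Polynomial.monomial k a).eval (m : ℂ)) : Module.End ℂ (PolA n))
        = a • (Elin n) ^ k := by
      rw [Elin_eq]
      induction k with
      | zero =>
        refine LinearMap.ext fun φ => ?_
        rw [pow_zero, LinearMap.smul_apply, Module.End.one_apply, cEl_apply]
        ext d
        simp [coeff_cE]
      | succ k ih =>
        rw [pow_succ, ← smul_mul_assoc, ← ih]
        refine LinearMap.ext fun φ => ?_
        rw [Module.End.mul_apply, cEl_apply, cEl_apply, cEl_apply, cE_cE]
        congr 1
        funext m
        simp [pow_succ, mul_assoc]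
    rw [this]
    exact Subalgebra.smul_mem _ (Subalgebra.pow_mem _ (Elin_mem n) k) a

/-! Bidifferential operators. -/

lemma Bidiff.of_fintype {n : ℕ} {ι : Type} [Fintype ι] {B : PolA n → PolA n → PolA n}
    (P Q : ι → Weyl n)
    (h : ∀ φ ψ, B φ ψ = ∑ α, (P α : Module.End ℂ (PolA n)) φ * (Q α : Module.End ℂ (PolA n)) ψ) :
    Bidiff n B := by
  refine ⟨Fintype.card ι, P ∘ (Fintype.equivFin ι).symm, Q ∘ (Fintype.equivFin ι).symm, ?_⟩
  intro φ ψ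
  rw [h, ← Equiv.sum_comp (Fintype.equivFin ι).symm]
  rfl

lemma Bidiff.add {n : ℕ} {B B' : PolA n → PolA n → PolA n} (h : Bidiff n B) (h' : Bidiff n B') :
    Bidiff n (fun φ ψ => B φ ψ + B' φ ψ) := by
  obtain ⟨N, P, Q, h⟩ := h
  obtain ⟨N', P', Q', h'⟩ := h'
  refine Bidiff.of_fintype (ι := Fin N ⊕ Fin N') (Sum.elim P P') (Sum.elim Q Q') ?_
  intro φ ψ
  simp [h, h']

lemma Bidiff.zero {n : ℕ} : Bidiff n (fun _ _ => 0) :=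
  ⟨0, Fin.elim0, Fin.elim0, by simp⟩

lemma Bidiff.sum {n : ℕ} {ι : Type*} (s : Finset ι) {B : ι → PolA n → PolA n → PolA n}
    (h : ∀ i ∈ s, Bidiff n (B i)) : Bidiff n (fun φ ψ => ∑ i ∈ s, B i φ ψ) := by
  classical
  induction s using Finset.induction_on with
  | empty => simpa using Bidiff.zero
  | insert a s ha ih =>
    simp only [Finset.sum_insert ha]
    exact Bidiff.add (h a (Finset.mem_insert_self _ _))
      (ih fun i hi => h i (Finset.mem_insert_of_mem hi))

lemma Bidiff.single {n : ℕ} {P Q : Module.End ℂ (PolA n)} (hP : P ∈ Weyl n) (hQ : Q ∈ Weyl n) :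
    Bidiff n (fun φ ψ => P φ * Q ψ) :=
  ⟨1, fun _ => ⟨P, hP⟩, fun _ => ⟨Q, hQ⟩, by simp⟩

lemma Bidiff.comp {n : ℕ} {W : Module.End ℂ (PolA n)} (hW : W ∈ Weyl n) :
    ∀ {B : PolA n → PolA n → PolA n}, Bidiff n B → Bidiff n (fun φ ψ => W (B φ ψ)) := by
  -- reduction: it suffices to treat single products
  have key : ∀ W : Module.End ℂ (PolA n),
      (∀ P ∈ Weyl n, ∀ Q ∈ Weyl n, Bidiff n (fun φ ψ => W (P φ * Q ψ))) →
      ∀ {B : PolA n → PolA n → PolA n}, Bidiff n B → Bidiff n (fun φ ψ => W (B φ ψ)) := by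
    intro W h B hB
    obtain ⟨N, P, Q, hB⟩ := hB
    simp only [hB, map_sum]
    exact Bidiff.sum _ fun i _ => h _ (P i).2 _ (Q i).2
  induction hW using Algebra.adjoin_induction with
  | mem x hx =>
    apply key
    intro P hP Q hQ
    rcases hx with (⟨i, rfl⟩ | ⟨i, rfl⟩) | ⟨v, rfl⟩
    · have := Bidiff.single (Subalgebra.mul_mem _ (u_mem (Sum.inl i)) hP) hQ
      simpa [mul_assoc] using this
    · have := Bidiff.single (Subalgebra.mul_mem _ (u_mem (Sum.inr i)) hP) hQ
      simpa [mul_assoc] using this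
    · have h1 := Bidiff.single (Subalgebra.mul_mem _ (pd_mem v) hP) hQ
      have h2 := Bidiff.single hP (Subalgebra.mul_mem _ (pd_mem v) hQ)
      have := Bidiff.add h2 h1
      convert this using 3 with φ ψ
      change pderiv v (P φ * Q ψ) = P φ * pderiv v (Q ψ) + pderiv v (P φ) * Q ψ
      rw [Derivation.leibniz]
      simp only [smul_eq_mul]; ring
  | algebraMap r =>
    apply key
    intro P hP Q hQ
    have := Bidiff.single (Subalgebra.smul_mem _ hP r) hQ
    simpa [Module.algebraMap_end_apply] using this
  | add x y _ _ hx hy =>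
    intro B hB
    exact Bidiff.add (hx hB) (hy hB)
  | mul x y _ _ hx hy =>
    intro B hB
    exact hx (hy hB)

lemma foldr_mem {n : ℕ} (l : List (Fin n)) (v : Fin n → Fin n ⊕ Fin n)
    {P : Module.End ℂ (PolA n)} (hP : P ∈ Weyl n) :
    ∃ Q ∈ Weyl n, ∀ φ, l.foldr (fun i acc => pderiv (v i) acc) (P φ) = Q φ := by
  induction l with
  | nil => exact ⟨P, hP, fun _ => rfl⟩
  | cons a l ih =>
    obtain ⟨Q, hQ, h⟩ := ih
    refine ⟨_, Subalgebra.mul_mem _ (pd_mem (v a)) hQ, fun φ => ?_⟩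
    rw [List.foldr_cons, h]
    rfl

lemma Nop_bidiff {n : ℕ} (k : ℕ) {P Q : Module.End ℂ (PolA n)} (hP : P ∈ Weyl n)
    (hQ : Q ∈ Weyl n) : Bidiff n (fun φ ψ => Nop k (P φ) (Q ψ)) := by
  unfold Nop
  have h : Bidiff n (fun φ ψ => ∑ α : Fin k → Fin n,
      ((List.ofFn α).foldr (fun i acc => pderiv (Sum.inr i) acc) (P φ)) *
      ((List.ofFn α).foldr (fun i acc => pderiv (Sum.inl i) acc) (Q ψ))) := by
    apply Bidiff.sum
    intro α _
    obtain ⟨P', hP', e1⟩ := foldr_mem (List.ofFn α) Sum.inr hP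
    obtain ⟨Q', hQ', e2⟩ := foldr_mem (List.ofFn α) Sum.inl hQ
    simp only [e1, e2]
    exact Bidiff.single hP' hQ'
  have := Bidiff.comp (W := algebraMap ℂ _ ((k.factorial : ℂ)⁻¹))
    (Subalgebra.algebraMap_mem _ _) h
  simpa only [Module.algebraMap_end_apply] using this

/-! Scalars. -/

lemma prod_two_even (y : ℂ) (k : ℕ) :
    ∏ j ∈ Finset.range (2 * k), (2 * y + (j : ℂ)) =
      2 ^ (2 * k) * (∏ i ∈ Finset.range k, (y + i)) * ∏ i ∈ Finset.range k, (y + 1 / 2 + i) := by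
  induction k with
  | zero => simp
  | succ k ih =>
    rw [show 2 * (k + 1) = 2 * k + 1 + 1 by ring, Finset.prod_range_succ, Finset.prod_range_succ,
      ih, Finset.prod_range_succ, Finset.prod_range_succ]
    push_cast
    ring

lemma prod_two_odd (y : ℂ) (k : ℕ) :
    ∏ j ∈ Finset.range (2 * k + 1), (2 * y + (j : ℂ)) =
      2 ^ (2 * k + 1) * (∏ i ∈ Finset.range (k + 1), (y + i)) *
        ∏ i ∈ Finset.range k, (y + 1 / 2 + i) := by
  rw [Finset.prod_range_succ, prod_two_even, Finset.prod_range_succ]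
  push_cast
  ring

lemma prod_Icc_split (f : ℕ → ℂ) {k q : ℕ} (h : k ≤ q) :
    ∏ i ∈ Finset.Icc 1 q, f i =
      (∏ i ∈ Finset.range k, f (i + 1)) * ∏ i ∈ Finset.Icc (k + 1) q, f i := by
  have e1 : Finset.Icc 1 q = Finset.Ico 1 (q + 1) := by ext; simp
  have e2 : Finset.Icc (k + 1) q = Finset.Ico (k + 1) (q + 1) := by ext; simp
  rw [e1, e2, ← Finset.prod_Ico_consecutive f (show 1 ≤ k + 1 by omega) (by omega),
    Finset.prod_Ico_eq_prod_range]
  simp [add_comm]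

lemma ne_aux (m a b : ℕ) (ha : 0 < a) : (m : ℂ) + (a : ℂ) / 2 + (b : ℂ) / 2 ≠ 0 := by
  have : (m : ℂ) + (a : ℂ) / 2 + (b : ℂ) / 2 = ((2 * m + a + b : ℕ) : ℂ) / 2 := by
    push_cast; ring
  rw [this]
  have : (2 * m + a + b) ≠ 0 := by omega
  exact div_ne_zero (Nat.cast_ne_zero.mpr this) two_ne_zero

lemma ne_prod (n m b k : ℕ) (hn : 0 < n) :
    ∏ i ∈ Finset.range k, ((m : ℂ) + (n : ℂ) / 2 + (b : ℂ) / 2 + (i : ℂ)) ≠ 0 := by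
  rw [Finset.prod_ne_zero_iff]
  intro i _
  have := ne_aux m n (b + 2 * i) hn
  intro h
  apply this
  rw [← h]; push_cast; ring

lemma g_poly (n p d : ℕ) (hn : 0 < n) (hd : d ≤ p) :
    IsPoly fun m => TScal n p m * gScal n (1 / 2) d m := by
  have hk : d / 2 ≤ p / 2 := Nat.div_le_div_right hd
  have main : ∀ m : ℕ, TScal n p m * gScal n (1 / 2) d m =
      ((d.factorial : ℂ)⁻¹ * (-1) ^ d * (2 ^ d)⁻¹) *
      ((∏ i ∈ Finset.Icc (d / 2 + 1) (p / 2), ((m : ℂ) + ((n : ℂ) / 2 + i))) *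
       ∏ i ∈ Finset.range (d / 2), ((m : ℂ) + ((n : ℂ) / 2 + 1 / 2 + ((d - d / 2 : ℕ) : ℂ) + i))) := by
    intro m
    set e : ℂ := (m : ℂ) + (n : ℂ) / 2 with he
    have hden : ∏ j ∈ Finset.range d, (2 * (m : ℂ) + (j : ℂ) + (n : ℂ) + 1) =
        2 ^ d * (∏ i ∈ Finset.range (d - d / 2), (e + 1 / 2 + i)) *
          ∏ i ∈ Finset.range (d / 2), (e + 1 + i) := by
      have e1 : ∀ j ∈ Finset.range d, (2 * (m : ℂ) + (j : ℂ) + (n : ℂ) + 1) =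
          2 * (e + 1 / 2) + j := by intro j _; rw [he]; ring
      rw [Finset.prod_congr rfl e1]
      have e2 : e + 1 / 2 + 1 / 2 = e + 1 := by ring
      rcases Nat.even_or_odd' d with ⟨k, rfl | rfl⟩
      · rw [prod_two_even, e2, show 2 * k / 2 = k by omega, show 2 * k - k = k by omega]
      · rw [prod_two_odd, e2, show (2 * k + 1) / 2 = k by omega,
          show 2 * k + 1 - k = k + 1 by omega]
    have hnum : ∏ j ∈ Finset.range d, (-(m : ℂ) - (j : ℂ) - 1 / 2 * ((n : ℂ) + 1)) =
        (-1) ^ d * ((∏ i ∈ Finset.range (d - d / 2), (e + 1 / 2 + i)) *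
          ∏ i ∈ Finset.range (d / 2), (e + 1 / 2 + ((d - d / 2 + i : ℕ) : ℂ))) := by
      rw [← Finset.prod_range_add (fun i : ℕ => e + 1 / 2 + (i : ℂ)),
        show d - d / 2 + d / 2 = d by omega]
      conv_rhs => rw [← Finset.card_range d]
      rw [← Finset.prod_const, Finset.card_range, ← Finset.prod_mul_distrib]
      apply Finset.prod_congr rfl
      intro j _
      rw [he]; ring
    have h1 := ne_prod n m 1 (d - d / 2) hn
    have h2 := ne_prod n m 2 (d / 2) hn
    simp only [← he, Nat.cast_one, Nat.cast_ofNat] at h1 h2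
    rw [show (2 : ℂ) / 2 = 1 by norm_num] at h2
    unfold gScal TScal
    rw [Finset.prod_div_distrib, hden, hnum, prod_Icc_split _ hk]
    have e3 : ∀ i ∈ Finset.range (d / 2), ((m : ℂ) + (n : ℂ) / 2 + ((i + 1 : ℕ) : ℂ)) = e + 1 + i := by
      intro i _; rw [he]; push_cast; ring
    have e4 : ∀ i ∈ Finset.range (d / 2),
        ((m : ℂ) + ((n : ℂ) / 2 + 1 / 2 + ((d - d / 2 : ℕ) : ℂ) + i)) =
        (e + 1 / 2 + ((d - d / 2 + i : ℕ) : ℂ)) := by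
      intro i _; rw [he, Nat.cast_add]; ring
    have e5 : ∀ i ∈ Finset.Icc (d / 2 + 1) (p / 2), ((m : ℂ) + ((n : ℂ) / 2 + (i : ℂ))) =
        (m : ℂ) + (n : ℂ) / 2 + (i : ℂ) := by
      intro i _; ring
    rw [Finset.prod_congr rfl e3, Finset.prod_congr rfl e4, Finset.prod_congr rfl e5]
    generalize (∏ i ∈ Finset.range (d / 2), (e + 1 + (i : ℂ))) = a at *
    generalize (∏ i ∈ Finset.range (d - d / 2), (e + 1 / 2 + (i : ℂ))) = b at *
    field_simp
  have : IsPoly fun m : ℕ => ((d.factorial : ℂ)⁻¹ * (-1) ^ d * (2 ^ d)⁻¹) *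
      ((∏ i ∈ Finset.Icc (d / 2 + 1) (p / 2), ((m : ℂ) + ((n : ℂ) / 2 + i))) *
       ∏ i ∈ Finset.range (d / 2), ((m : ℂ) + ((n : ℂ) / 2 + 1 / 2 + ((d - d / 2 : ℕ) : ℂ) + i))) :=
    (IsPoly.const _).mul ((IsPoly.prod _ _).mul (IsPoly.prod _ _))
  simpa only [← main] using this

lemma h_poly (n p d : ℕ) (hn : 0 < n) (hd : d ≤ p) :
    IsPoly fun m => hScal n (1 / 2) d m * SScal n p (m + d) := by
  have hk : d / 2 ≤ p / 2 := Nat.div_le_div_right hd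
  have main : ∀ m : ℕ, hScal n (1 / 2) d m * SScal n p (m + d) =
      ((d.factorial : ℂ)⁻¹ * (2 ^ d)⁻¹) *
      ((∏ i ∈ Finset.Icc (d / 2 + 1) (p / 2), ((m : ℂ) + ((d : ℂ) + (n : ℂ) / 2 - i))) *
       ∏ i ∈ Finset.range (d / 2), ((m : ℂ) + ((n : ℂ) / 2 + 1 / 2 + i))) := by
    intro m
    set e : ℂ := (m : ℂ) + (n : ℂ) / 2 with he
    have hden : ∏ j ∈ Finset.range d, (2 * (m : ℂ) + (j : ℂ) + (n : ℂ) + (d : ℂ)) =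
        2 ^ d * (∏ i ∈ Finset.range (d - d / 2), (e + 1 / 2 + ((d / 2 + i : ℕ) : ℂ))) *
          ∏ i ∈ Finset.range (d / 2), (e + ((d - d / 2 : ℕ) : ℂ) + i) := by
      have e1 : ∀ j ∈ Finset.range d, (2 * (m : ℂ) + (j : ℂ) + (n : ℂ) + (d : ℂ)) =
          2 * (e + d / 2) + j := by intro j _; rw [he]; ring
      rw [Finset.prod_congr rfl e1]
      rcases Nat.even_or_odd' d with ⟨k, rfl | rfl⟩
      · rw [prod_two_even, show 2 * k / 2 = k by omega, show 2 * k - k = k by omega,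
          mul_right_comm]
        congr 1
        · congr 1
          apply Finset.prod_congr rfl
          intro i _; push_cast; ring
        · apply Finset.prod_congr rfl
          intro i _; push_cast; ring
      · rw [prod_two_odd, show (2 * k + 1) / 2 = k by omega,
          show 2 * k + 1 - k = k + 1 by omega]
        congr 1
        · congr 1
          apply Finset.prod_congr rfl
          intro i _; push_cast; ring
        · apply Finset.prod_congr rfl
          intro i _; push_cast; ring
    have hnum : ∏ j ∈ Finset.range d, ((m : ℂ) + (j : ℂ) + 1 / 2 * ((n : ℂ) + 1)) =
        (∏ i ∈ Finset.range (d / 2), (e + 1 / 2 + i)) *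
          ∏ i ∈ Finset.range (d - d / 2), (e + 1 / 2 + ((d / 2 + i : ℕ) : ℂ)) := by
      rw [← Finset.prod_range_add (fun i : ℕ => e + 1 / 2 + (i : ℂ)),
        show d / 2 + (d - d / 2) = d by omega]
      apply Finset.prod_congr rfl
      intro j _
      rw [he]; ring
    have h1 := ne_prod n m (1 + 2 * (d / 2)) (d - d / 2) hn
    have h2 := ne_prod n m (2 * (d - d / 2)) (d / 2) hn
    simp only [← he] at h1 h2
    have e1 : ∀ i ∈ Finset.range (d - d / 2), e + ((1 + 2 * (d / 2) : ℕ) : ℂ) / 2 + (i : ℂ)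
        = e + 1 / 2 + ((d / 2 + i : ℕ) : ℂ) := by
      intro i _; push_cast; ring
    have e2 : ∀ i ∈ Finset.range (d / 2), e + ((2 * (d - d / 2) : ℕ) : ℂ) / 2 + (i : ℂ)
        = e + ((d - d / 2 : ℕ) : ℂ) + i := by
      intro i _; rw [Nat.cast_mul]; push_cast; ring
    rw [Finset.prod_congr rfl e1] at h1
    rw [Finset.prod_congr rfl e2] at h2
    have hS : ∏ i ∈ Finset.range (d / 2),
        (((m + d : ℕ) : ℂ) + (n : ℂ) / 2 - ((i + 1 : ℕ) : ℂ)) =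
        ∏ i ∈ Finset.range (d / 2), (e + ((d - d / 2 : ℕ) : ℂ) + i) := by
      rw [← Finset.prod_range_reflect]
      apply Finset.prod_congr rfl
      intro i hi
      have hi' := Finset.mem_range.mp hi
      have : (d : ℂ) = ((d - d / 2 : ℕ) : ℂ) + (i : ℂ) + ((d / 2 - 1 - i + 1 : ℕ) : ℂ) := by
        rw [← Nat.cast_add, ← Nat.cast_add]
        congr 1
        omega
      rw [Nat.cast_add m d, he]
      linear_combination this
    unfold hScal SScal
    rw [Finset.prod_div_distrib, hden, hnum, prod_Icc_split _ hk, hS]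
    have e4 : ∀ i ∈ Finset.range (d / 2),
        ((m : ℂ) + ((n : ℂ) / 2 + 1 / 2 + (i : ℂ))) = e + 1 / 2 + i := by
      intro i _; rw [he]; ring
    have e5 : ∀ i ∈ Finset.Icc (d / 2 + 1) (p / 2),
        ((m : ℂ) + ((d : ℂ) + (n : ℂ) / 2 - (i : ℂ))) =
        ((m + d : ℕ) : ℂ) + (n : ℂ) / 2 - (i : ℂ) := by
      intro i _; push_cast; ring
    rw [Finset.prod_congr rfl e4, Finset.prod_congr rfl e5]
    generalize (∏ i ∈ Finset.range (d / 2), (e + ((d - d / 2 : ℕ) : ℂ) + (i : ℂ))) = a at *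
    generalize (∏ i ∈ Finset.range (d - d / 2), (e + 1 / 2 + ((d / 2 + i : ℕ) : ℂ))) = b at *
    field_simp
  have : IsPoly fun m : ℕ => ((d.factorial : ℂ)⁻¹ * (2 ^ d)⁻¹) *
      ((∏ i ∈ Finset.Icc (d / 2 + 1) (p / 2), ((m : ℂ) + ((d : ℂ) + (n : ℂ) / 2 - i))) *
       ∏ i ∈ Finset.range (d / 2), ((m : ℂ) + ((n : ℂ) / 2 + 1 / 2 + i))) :=
    (IsPoly.const _).mul ((IsPoly.prod _ _).mul (IsPoly.prod _ _))
  simpa only [← main] using this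

lemma Dop_iter {n : ℕ} (d : ℕ) (φ : PolA n) : Dop^[d] φ = (Dlin n ^ d) φ := by
  induction d generalizing φ with
  | zero => simp
  | succ d ih =>
    rw [Function.iterate_succ_apply, ih, pow_succ, Module.End.mul_apply, Dlin_apply]

lemma bh_Sp (n p d : ℕ) (hn : 0 < n) (hd : d ≤ p) :
    ∃ P ∈ Weyl n, ∀ φ : PolA n, bh (1 / 2) d (Sp n p φ) = P φ := by
  refine ⟨_, Subalgebra.mul_mem _ (cEl_mem (h_poly n p d hn hd))
    (Subalgebra.pow_mem _ (Dlin_mem n) d), fun φ => ?_⟩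
  unfold bh Sp
  rw [Dop_iter_cE, cE_cE, Dop_iter]
  rfl

lemma Tp_bg (n p d : ℕ) (hn : 0 < n) (hd : d ≤ p) :
    ∃ P ∈ Weyl n, ∀ φ : PolA n, Tp n p (bg (1 / 2) d φ) = P φ := by
  refine ⟨_, Subalgebra.mul_mem _ (cEl_mem (g_poly n p d hn hd))
    (Subalgebra.pow_mem _ (Dlin_mem n) d), fun φ => ?_⟩
  unfold bg Tp
  rw [cE_cE, Dop_iter]
  rfl

end LO

/-- Theorem 5, existence: for `n` odd and `p ≥ 1`, the bilinear map
`Z_p(φ,ψ) = T_p(C^{1/2}_p(S_p φ, S_p ψ))` is bidifferential. -/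
theorem stmt_12 (n : ℕ) (hn : Odd n) (p : ℕ) (hp : 1 ≤ p) :
    LO.Bidiff n
      (fun φ ψ => LO.Tp n p (LO.C n (1 / 2) p (LO.Sp n p φ) (LO.Sp n p ψ))) := by
  have hn' : 0 < n := hn.pos
  unfold LO.C LO.Tp
  simp only [LO.cE_sum]
  refine LO.Bidiff.sum _ fun i hi => LO.Bidiff.sum _ fun j hj => LO.Bidiff.sum _ fun k hk =>
    LO.Bidiff.sum _ fun m hm => ?_
  rw [Finset.mem_range] at hi hj hk hm
  split_ifs with h
  · obtain ⟨P, hP, e1⟩ := LO.bh_Sp n p i hn' (by omega)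
    obtain ⟨Q, hQ, e2⟩ := LO.bh_Sp n p j hn' (by omega)
    obtain ⟨R, hR, e3⟩ := LO.Tp_bg n p m hn' (by omega)
    simp only [LO.Tp] at e3
    simp only [e1, e2, e3]
    exact LO.Bidiff.comp hR (LO.Nop_bidiff k hP hQ)
  · have : ∀ c : ℕ → ℂ, LO.cE c (0 : PolA n) = 0 := fun c => map_zero (LO.cEl c)
    simp only [this]
    exact LO.Bidiff.zero
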